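/- Let H = K_{p,q} be the complete bipartite graph on p + q = n vertices, with p, q ≥ 1. Then its coronal is χ_H(λ) = (nλ + 2pq)/(λ² − pq) = ((p+q)λ + 2pq)/(λ² − pq) in ℂ(λ). -/

import Mathlib

open Matrix Polynomial

/-- The characteristic matrix `λ I - B` of `B`, over the field `ℂ(λ)` of rational functions. -/
noncomputable def charMatRatFunc {V : Type*} [Fintype V] [DecidableEq V]
    (B : Matrix V V ℂ) : Matrix V V (RatFunc ℂ) :=
  Matrix.scalar V (RatFunc.X : RatFunc ℂ) - B.map (algebraMap ℂ (RatFunc ℂ))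

/-- The coronal of a matrix `B`: the sum of the entries of `(λ I - B)⁻¹` over `ℂ(λ)`. -/
noncomputable def coronal {V : Type*} [Fintype V] [DecidableEq V]
    (B : Matrix V V ℂ) : RatFunc ℂ :=
  ∑ i, ∑ j, (charMatRatFunc B)⁻¹ i j

/-- The adjacency matrix of the corona `G ∘ H`. -/
def coronaMatrix {α β : Type*} (A : Matrix α α ℂ) (B : Matrix β β ℂ)
    [DecidableEq α] :
    Matrix (α ⊕ β × α) (α ⊕ β × α) ℂ :=
  Matrix.fromBlocks A
    (Matrix.of fun i p => if i = p.2 then 1 else 0)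
    (Matrix.of fun p j => if p.2 = j then 1 else 0)
    (Matrix.of fun p q => if p.2 = q.2 then B p.1 q.1 else 0)


/-- The adjacency matrix of the complete bipartite graph `K_{p,q}`:
the block matrix `[[0_{p,p}, 1_{p,q}], [1_{q,p}, 0_{q,q}]]`. -/
def completeBipartiteMatrix (p q : ℕ) : Matrix (Fin p ⊕ Fin q) (Fin p ⊕ Fin q) ℂ :=
  Matrix.fromBlocks 0 (Matrix.of fun _ _ => 1) (Matrix.of fun _ _ => 1) 0

/-!
Since `λI - B` is invertible over `ℂ(λ)`, the coronal of `B` is the sum of the entries of any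
solution `v` of `(λI - B)v = 1`. For a bipartite graph in which all vertices in the same part have
the same degree, the solution is constant on each part, so finding it is a `2 × 2` linear system.
-/

section

variable {V : Type*} [Fintype V] [DecidableEq V]

theorem charMatRatFunc_eq_map_charmatrix (B : Matrix V V ℂ) :
    charMatRatFunc B = B.charmatrix.map (algebraMap ℂ[X] (RatFunc ℂ)) := by
  ext i j
  obtain rfl | hij := eq_or_ne i j
  · simp [charMatRatFunc, RatFunc.algebraMap_eq_C]
  · simp [charMatRatFunc, hij, RatFunc.algebraMap_eq_C]

theorem det_charMatRatFunc (B : Matrix V V ℂ) :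
    (charMatRatFunc B).det = algebraMap ℂ[X] (RatFunc ℂ) B.charpoly := by
  rw [charMatRatFunc_eq_map_charmatrix, charpoly, RingHom.map_det, RingHom.mapMatrix_apply]

theorem isUnit_det_charMatRatFunc (B : Matrix V V ℂ) : IsUnit (charMatRatFunc B).det := by
  rw [det_charMatRatFunc, isUnit_iff_ne_zero]
  exact RatFunc.algebraMap_ne_zero B.charpoly_monic.ne_zero

theorem charMatRatFunc_mulVec (B : Matrix V V ℂ) (v : V → RatFunc ℂ) :
    charMatRatFunc B *ᵥ v = (RatFunc.X : RatFunc ℂ) • v - B.map RatFunc.C *ᵥ v := by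
  rw [charMatRatFunc, sub_mulVec, scalar_apply, ← smul_one_eq_diagonal, smul_mulVec, one_mulVec,
    RatFunc.algebraMap_eq_C]

theorem coronal_eq_sum_of_charMatRatFunc_mulVec_eq_one {B : Matrix V V ℂ}
    {v : V → RatFunc ℂ} (hv : charMatRatFunc B *ᵥ v = 1) :
    coronal B = ∑ i, v i := by
  have inv_mulVec_one : (charMatRatFunc B)⁻¹ *ᵥ 1 = v := by
    rw [← hv, mulVec_mulVec, nonsing_inv_mul _ (isUnit_det_charMatRatFunc B), one_mulVec]
  simp only [← inv_mulVec_one, mulVec, dotProduct_one, coronal]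

end

theorem ratFunc_X_pow_sub_C_ne_zero {R : Type*} [CommRing R] [IsDomain R] {n : ℕ} (hn : n ≠ 0)
    (c : R) : (RatFunc.X ^ n - RatFunc.C c : RatFunc R) ≠ 0 := by
  simpa using RatFunc.algebraMap_ne_zero (monic_X_pow_sub_C c hn).ne_zero

theorem map_mulVec_const_of_row_sum_eq {R S m n : Type*} [NonAssocSemiring R]
    [NonAssocSemiring S] [Fintype n] {M : Matrix m n R} {r : R} (hM : ∀ i, ∑ j, M i j = r)
    (f : R →+* S) (a : S) :
    M.map f *ᵥ Function.const n a = Function.const m (f r * a) := by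
  ext i
  simp [mulVec, dotProduct, ← Finset.sum_mul, ← map_sum, hM]

section

variable {m n : Type*} [Fintype m] [Fintype n] [DecidableEq m] [DecidableEq n]
  {M : Matrix m n ℂ} {N : Matrix n m ℂ} {r s : ℂ}

theorem charMatRatFunc_fromBlocks_zero_mulVec_const (hM : ∀ i, ∑ j, M i j = r)
    (hN : ∀ j, ∑ i, N j i = s) (a b : RatFunc ℂ) :
    charMatRatFunc (fromBlocks 0 M N 0) *ᵥ Sum.elim (Function.const m a) (Function.const n b) =
      Sum.elim (Function.const m (RatFunc.X * a - RatFunc.C r * b))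
        (Function.const n (RatFunc.X * b - RatFunc.C s * a)) := by
  rw [charMatRatFunc_mulVec, fromBlocks_map, fromBlocks_mulVec, Sum.elim_comp_inl,
    Sum.elim_comp_inr, map_mulVec_const_of_row_sum_eq hM, map_mulVec_const_of_row_sum_eq hN]
  ext (i | j) <;> simp

theorem coronal_fromBlocks_zero_of_linear_system (hM : ∀ i, ∑ j, M i j = r)
    (hN : ∀ j, ∑ i, N j i = s) {a b : RatFunc ℂ} (hm : RatFunc.X * a - RatFunc.C r * b = 1)
    (hn : RatFunc.X * b - RatFunc.C s * a = 1) :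
    coronal (fromBlocks 0 M N 0) = Fintype.card m * a + Fintype.card n * b := by
  have mulVec_eq_one : charMatRatFunc (fromBlocks 0 M N 0) *ᵥ
      Sum.elim (Function.const m a) (Function.const n b) = 1 := by
    rw [charMatRatFunc_fromBlocks_zero_mulVec_const hM hN, hm, hn, Function.const_one,
      Function.const_one, Sum.elim_one_one]
  rw [coronal_eq_sum_of_charMatRatFunc_mulVec_eq_one mulVec_eq_one]
  simp

/-- For the adjacency matrix of a bipartite graph, `r` and `s` are the degrees of the vertices in
the two parts. -/
theorem coronal_completeBipartite_general (hM : ∀ i, ∑ j, M i j = r)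
    (hN : ∀ j, ∑ i, N j i = s) :
    coronal (fromBlocks 0 M N 0) =
      (((Fintype.card m : RatFunc ℂ) + (Fintype.card n : RatFunc ℂ)) * RatFunc.X +
          ((Fintype.card m : RatFunc ℂ) * RatFunc.C r +
            (Fintype.card n : RatFunc ℂ) * RatFunc.C s)) /
        (RatFunc.X ^ 2 - RatFunc.C r * RatFunc.C s) := by
  have denom_ne_zero : (RatFunc.X ^ 2 - RatFunc.C r * RatFunc.C s : RatFunc ℂ) ≠ 0 := by
    simpa only [map_mul] using ratFunc_X_pow_sub_C_ne_zero two_ne_zero (r * s)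
  set D : RatFunc ℂ := RatFunc.X ^ 2 - RatFunc.C r * RatFunc.C s with hD
  have row_m : RatFunc.X * ((RatFunc.X + RatFunc.C r) / D) -
      RatFunc.C r * ((RatFunc.X + RatFunc.C s) / D) = 1 := by
    field_simp
    rw [hD]
    ring
  have row_n : RatFunc.X * ((RatFunc.X + RatFunc.C s) / D) -
      RatFunc.C s * ((RatFunc.X + RatFunc.C r) / D) = 1 := by
    field_simp
    rw [hD]
    ring
  rw [coronal_fromBlocks_zero_of_linear_system hM hN row_m row_n]
  ring

end

/-- The coronal of the complete bipartite graph `K_{p,q}` on `n = p + q` vertices is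
`((p + q)λ + 2pq) / (λ² - pq)`. -/
theorem coronal_completeBipartite (p q : ℕ) (hp : 1 ≤ p) (hq : 1 ≤ q) :
    coronal (completeBipartiteMatrix p q) =
      (((p : RatFunc ℂ) + (q : RatFunc ℂ)) * RatFunc.X + 2 * (p : RatFunc ℂ) * (q : RatFunc ℂ)) /
        (RatFunc.X ^ 2 - (p : RatFunc ℂ) * (q : RatFunc ℂ)) := by
  rw [completeBipartiteMatrix, coronal_completeBipartite_general (r := q) (s := p) (by simp)
    (by simp)]
  simp only [Fintype.card_fin, map_natCast]
  ring
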